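/- arXiv:1603.09472 — 5 statements merged into one kernel-verified Lean document; each statement's English description precedes it below -/
import Mathlib

section
/- Let (Ω,𝓕,ℙ) be a probability space, (T,𝓑,μ) a σ-finite measure space, and S a Polish space. Let c: Ω×T×S→ℝ be jointly measurable with s ↦ c_t(ω,s) continuous for every (ω,t), and let X^n: Ω×T→S (n=0,1,2,…) be jointly measurable processes. Let h ∈ L¹(μ) with h ≥ 0 and define the truncation c^h_t(ω,x) := max{−h_t, min{h_t, c_t(ω,x)}} and I(X^n,c^h)(ω) = ∫_T c^h_t(ω,X^n_t(ω)) μ(dt). Suppose X^n converges to X^0 in probability in finite dimension, i.e. there exists T₀ ∈ 𝓑 with μ(T∖T₀)=0 such that for all t₁,…,t_k ∈ T₀ the random vector (X^n_{t₁},…,X^n_{t_k}) converges in probability to (X^0_{t₁},…,X^0_{t_k}). Then for every bounded real random variable Y on Ω and every bounded Lipschitz function f: ℝ→ℝ, E[Y·f(I(X^n,c^h))] → E[Y·f(I(X^0,c^h))] as n → ∞. -/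
open MeasureTheory Filter Topology

/-!
For almost every `t`, continuity of `c_t(ω, ·)` gives `c^h_t(X^n_t) → c^h_t(X^0_t)` in probability;
the truncation bounds these variables by `|h t|`, so the convergence is also in `L¹(P)`. Since
`h ∈ L¹(μ)`, dominated convergence in `t` upgrades this to `L¹(P ⊗ μ)`, and by Fubini
`I(X^n, c^h) → I(X^0, c^h)` in `L¹(P)`, hence in probability. Finally `Y · f(I(X^n, c^h))` converges
in probability as well and is dominated by a multiple of `|Y|`.
-/

open scoped ENNReal BoundedContinuousFunction

section ConvergenceInMeasure

variable {α : Type*} [MeasurableSpace α] {μ : Measure α}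

theorem tendstoInMeasure_apply {ι κ : Type*} [Fintype κ] {E : κ → Type*}
    [∀ k, PseudoEMetricSpace (E k)] {l : Filter ι} {f : ι → α → ∀ k, E k} {g : α → ∀ k, E k}
    (hfg : TendstoInMeasure μ f l g) (k : κ) :
    TendstoInMeasure μ (fun i x => f i x k) l (fun x => g x k) := fun ε hε =>
  tendsto_of_tendsto_of_tendsto_of_le_of_le tendsto_const_nhds (hfg ε hε) (fun _ => zero_le)
    fun i => measure_mono fun x hx => le_trans hx (edist_le_pi_edist (f i x) (g x) k)

theorem tendstoInMeasure_comp_of_ae_continuousAt [IsFiniteMeasure μ] {S E : Type*}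
    [PseudoEMetricSpace S] [PseudoEMetricSpace E] {φ : α → S → E} {f : ℕ → α → S} {g : α → S}
    (hφ_meas : ∀ n, AEStronglyMeasurable (fun x => φ x (f n x)) μ)
    (hφ_cont : ∀ᵐ x ∂μ, ContinuousAt (φ x) (g x)) (hfg : TendstoInMeasure μ f atTop g) :
    TendstoInMeasure μ (fun n x => φ x (f n x)) atTop (fun x => φ x (g x)) := by
  rw [exists_seq_tendstoInMeasure_atTop_iff hφ_meas]
  intro ns hns
  obtain ⟨ms, hms, hlim⟩ := (hfg.comp hns.tendsto_atTop).exists_seq_tendsto_ae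
  refine ⟨ms, hms, ?_⟩
  filter_upwards [hφ_cont, hlim] with x hcont hx using hcont.tendsto.comp hx

theorem tendsto_lintegral_enorm_sub_of_tendstoInMeasure {E : Type*} [NormedAddCommGroup E]
    {f : ℕ → α → E} {g : α → E} {bound : α → ℝ} (hf : ∀ n, AEStronglyMeasurable (f n) μ)
    (hbound_int : Integrable bound μ) (hbound : ∀ n, ∀ᵐ x ∂μ, ‖f n x‖ ≤ bound x)
    (hfg : TendstoInMeasure μ f atTop g) :
    Tendsto (fun n => ∫⁻ x, ‖f n x - g x‖ₑ ∂μ) atTop (𝓝 0) := by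
  refine tendsto_of_subseq_tendsto fun ns hns => ?_
  obtain ⟨ms, -, hlim⟩ := (hfg.comp hns).exists_seq_tendsto_ae
  refine ⟨ms, ?_⟩
  simp only [← ofReal_norm]
  exact tendsto_lintegral_norm_of_dominated_convergence (fun n => hf (ns (ms n)))
    hbound_int.hasFiniteIntegral (fun n => hbound (ns (ms n))) hlim

theorem tendsto_integral_mul_comp_of_tendstoInMeasure [IsFiniteMeasure μ] {S : Type*}
    [PseudoEMetricSpace S] {f : ℕ → α → S} {g : α → S} (hf : ∀ n, AEStronglyMeasurable (f n) μ)
    (hfg : TendstoInMeasure μ f atTop g) {w : α → ℝ} (hw : Integrable w μ) (φ : S →ᵇ ℝ) :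
    Tendsto (fun n => ∫ x, w x * φ (f n x) ∂μ) atTop (𝓝 (∫ x, w x * φ (g x) ∂μ)) := by
  have integrable_mul_comp {u : α → S} (hu : AEStronglyMeasurable u μ) :
      Integrable (fun x => w x * φ (u x)) μ :=
    hw.mul_bdd (φ.continuous.comp_aestronglyMeasurable hu)
      (.of_forall fun x => φ.norm_coe_le_norm _)
  have hmul_meas (n : ℕ) := (integrable_mul_comp (hf n)).aestronglyMeasurable
  refine tendsto_integral_of_L1 _ (integrable_mul_comp (hfg.aestronglyMeasurable hf)).1
    (.of_forall fun n => integrable_mul_comp (hf n)) ?_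
  refine tendsto_lintegral_enorm_sub_of_tendstoInMeasure hmul_meas (hw.norm.mul_const ‖φ‖)
    (fun n => .of_forall fun x => ?_)
    (tendstoInMeasure_comp_of_ae_continuousAt (φ := fun x s => w x * φ s) hmul_meas
      (.of_forall fun x => by fun_prop) hfg)
  rw [norm_mul]
  gcongr
  exact φ.norm_coe_le_norm _

end ConvergenceInMeasure

section Product

variable {α β : Type*} [MeasurableSpace α] [MeasurableSpace β] {μ : Measure α} {ν : Measure β}
  [SFinite ν] {E : Type*} [NormedAddCommGroup E]

theorem ae_ae_swap_of_ae_prod [SFinite μ] {p : α × β → Prop} (hp : ∀ᵐ z ∂μ.prod ν, p z) :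
    ∀ᵐ y ∂ν, ∀ᵐ x ∂μ, p (x, y) :=
  Measure.ae_ae_of_ae_prod (Measure.measurePreserving_swap.quasiMeasurePreserving.ae hp)

theorem tendsto_lintegral_prod_enorm_sub_of_tendstoInMeasure [SFinite μ] {F : ℕ → α × β → E}
    {G : α × β → E} {bound : α × β → ℝ} (hF : ∀ n, AEStronglyMeasurable (F n) (μ.prod ν))
    (hG : Integrable G (μ.prod ν)) (hbound_int : Integrable bound (μ.prod ν))
    (hbound : ∀ n, ∀ᵐ z ∂μ.prod ν, ‖F n z‖ ≤ bound z)
    (hFG : ∀ᵐ y ∂ν, TendstoInMeasure μ (fun n x => F n (x, y)) atTop (fun x => G (x, y))) :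
    Tendsto (fun n => ∫⁻ z, ‖F n z - G z‖ₑ ∂μ.prod ν) atTop (𝓝 0) := by
  have hsub_meas (n : ℕ) : AEMeasurable (fun z => ‖F n z - G z‖ₑ) (μ.prod ν) :=
    ((hF n).sub hG.1).enorm
  have hdom_meas : AEMeasurable (fun z => ‖bound z‖ₑ + ‖G z‖ₑ) (μ.prod ν) :=
    hbound_int.1.enorm.add hG.1.enorm
  have hdom_fin : ∫⁻ y, ∫⁻ x, ‖bound (x, y)‖ₑ + ‖G (x, y)‖ₑ ∂μ ∂ν ≠ ∞ := by
    rw [← lintegral_prod_symm _ hdom_meas, lintegral_add_left' hbound_int.1.enorm]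
    exact ENNReal.add_ne_top.2 ⟨hbound_int.2.ne, hG.2.ne⟩
  have hdom (n : ℕ) : ∀ᵐ y ∂ν,
      ∫⁻ x, ‖F n (x, y) - G (x, y)‖ₑ ∂μ ≤ ∫⁻ x, ‖bound (x, y)‖ₑ + ‖G (x, y)‖ₑ ∂μ := by
    filter_upwards [ae_ae_swap_of_ae_prod (hbound n)] with y hy
    refine lintegral_mono_ae (hy.mono fun x hx => enorm_sub_le.trans ?_)
    gcongr
    exact enorm_le_iff_norm_le.2 (hx.trans (le_abs_self _))
  have hlim : ∀ᵐ y ∂ν,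
      Tendsto (fun n => ∫⁻ x, ‖F n (x, y) - G (x, y)‖ₑ ∂μ) atTop (𝓝 0) := by
    filter_upwards [ae_all_iff.2 fun n => (hF n).prod_swap.prodMk_left,
      hbound_int.prod_left_ae, ae_all_iff.2 fun n => ae_ae_swap_of_ae_prod (hbound n), hFG]
      with y hF_y hint_y hbound_y hFG_y
    exact tendsto_lintegral_enorm_sub_of_tendstoInMeasure hF_y hint_y hbound_y hFG_y
  simp only [lintegral_prod_symm _ (hsub_meas _)]
  simpa only [lintegral_zero] using tendsto_lintegral_of_dominated_convergence' _
    (fun n => (hsub_meas n).lintegral_prod_left') hdom hdom_fin hlim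

variable [NormedSpace ℝ E]

theorem tendstoInMeasure_integral_of_tendsto_lintegral_prod {F : ℕ → α × β → E} {G : α × β → E}
    (hF : ∀ n, Integrable (F n) (μ.prod ν)) (hG : Integrable G (μ.prod ν))
    (hFG : Tendsto (fun n => ∫⁻ z, ‖F n z - G z‖ₑ ∂μ.prod ν) atTop (𝓝 0)) :
    TendstoInMeasure μ (fun n x => ∫ y, F n (x, y) ∂ν) atTop (fun x => ∫ y, G (x, y) ∂ν) := by
  refine tendstoInMeasure_of_tendsto_eLpNorm one_ne_zero
    (fun n => (hF n).integral_prod_left.1) hG.integral_prod_left.1 ?_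
  refine tendsto_of_tendsto_of_tendsto_of_le_of_le tendsto_const_nhds hFG
    (fun _ => zero_le) fun n => ?_
  simp only [eLpNorm_one_eq_lintegral_enorm, Pi.sub_apply]
  rw [lintegral_prod (fun z => ‖F n z - G z‖ₑ) ((hF n).sub hG).1.enorm]
  refine lintegral_mono_ae ?_
  filter_upwards [((integrable_prod_iff (hF n).1).1 (hF n)).1,
    ((integrable_prod_iff hG.1).1 hG).1] with x hF_x hG_x
  rw [← integral_sub hF_x hG_x]
  exact enorm_integral_le_lintegral_enorm _

theorem tendstoInMeasure_integral_comp_of_dominated [IsFiniteMeasure μ] {S : Type*}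
    [PseudoEMetricSpace S] {φ : α → β → S → E} {X : ℕ → α → β → S} {Z : α → β → S}
    {bound : α × β → ℝ}
    (hφX_meas : ∀ n, AEStronglyMeasurable (fun z => φ z.1 z.2 (X n z.1 z.2)) (μ.prod ν))
    (hφZ_meas : AEStronglyMeasurable (fun z => φ z.1 z.2 (Z z.1 z.2)) (μ.prod ν))
    (hφ_cont : ∀ x y, Continuous (φ x y)) (hbound_int : Integrable bound (μ.prod ν))
    (hbound : ∀ x y s, ‖φ x y s‖ ≤ bound (x, y))
    (hXZ : ∀ᵐ y ∂ν, TendstoInMeasure μ (fun n x => X n x y) atTop (fun x => Z x y)) :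
    TendstoInMeasure μ (fun n x => ∫ y, φ x y (X n x y) ∂ν) atTop
      (fun x => ∫ y, φ x y (Z x y) ∂ν) := by
  have hφX_int (n : ℕ) : Integrable (fun z => φ z.1 z.2 (X n z.1 z.2)) (μ.prod ν) :=
    hbound_int.mono' (hφX_meas n) (.of_forall fun z => hbound z.1 z.2 _)
  have hφZ_int : Integrable (fun z => φ z.1 z.2 (Z z.1 z.2)) (μ.prod ν) :=
    hbound_int.mono' hφZ_meas (.of_forall fun z => hbound z.1 z.2 _)
  have hφX_ae : ∀ᵐ y ∂ν, TendstoInMeasure μ (fun n x => φ x y (X n x y)) atTop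
      (fun x => φ x y (Z x y)) := by
    filter_upwards [ae_all_iff.2 fun n => (hφX_meas n).prod_swap.prodMk_left, hXZ]
      with y hmeas_y hXZ_y
    exact tendstoInMeasure_comp_of_ae_continuousAt (φ := fun x => φ x y) hmeas_y
      (.of_forall fun x => (hφ_cont x y).continuousAt) hXZ_y
  have hL1 : Tendsto
      (fun n => ∫⁻ z, ‖φ z.1 z.2 (X n z.1 z.2) - φ z.1 z.2 (Z z.1 z.2)‖ₑ ∂μ.prod ν) atTop (𝓝 0) :=
    tendsto_lintegral_prod_enorm_sub_of_tendstoInMeasure hφX_meas hφZ_int hbound_int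
      (fun n => .of_forall fun z => hbound z.1 z.2 _) hφX_ae
  exact tendstoInMeasure_integral_of_tendsto_lintegral_prod
    (F := fun n z => φ z.1 z.2 (X n z.1 z.2)) (G := fun z => φ z.1 z.2 (Z z.1 z.2))
    hφX_int hφZ_int hL1

end Product

theorem abs_max_neg_min_le_abs (a x : ℝ) : |max (-a) (min a x)| ≤ |a| :=
  abs_le.2 ⟨(neg_le_neg (le_abs_self a)).trans (le_max_left _ _),
    max_le (neg_le_abs a) ((min_le_left _ _).trans (le_abs_self a))⟩

theorem stable_convergence_truncated_integrals_general
    {Ω : Type*} [MeasurableSpace Ω] (P : Measure Ω) [IsFiniteMeasure P]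
    {T : Type*} [MeasurableSpace T] (μ : Measure T) [SFinite μ]
    {S : Type*} [PseudoEMetricSpace S] [MeasurableSpace S]
    (c : Ω → T → S → ℝ)
    (hc_meas : Measurable fun p : Ω × T × S => c p.1 p.2.1 p.2.2)
    (hc_cont : ∀ ω t, Continuous fun s => c ω t s)
    (X : ℕ → Ω → T → S) (hX_meas : ∀ n, Measurable fun p : Ω × T => X n p.1 p.2)
    (Z : Ω → T → S) (hZ_meas : Measurable fun p : Ω × T => Z p.1 p.2)
    (h : T → ℝ) (hh_int : Integrable h μ)
    (hXZ : ∀ᵐ t ∂μ, TendstoInMeasure P (fun n ω => X n ω t) atTop (fun ω => Z ω t))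
    (Y : Ω → ℝ) (hY_int : Integrable Y P) (f : ℝ →ᵇ ℝ) :
    Tendsto
      (fun n => ∫ ω, Y ω *
        f (∫ t, max (-(h t)) (min (h t) (c ω t (X n ω t))) ∂μ) ∂P) atTop
      (𝓝 (∫ ω, Y ω *
        f (∫ t, max (-(h t)) (min (h t) (c ω t (Z ω t))) ∂μ) ∂P)) := by
  have hh_prod : Integrable (fun p : Ω × T => h p.2) (P.prod μ) := hh_int.comp_snd P
  have hcomp_meas {U : Ω → T → S} (hU : Measurable fun p : Ω × T => U p.1 p.2) :
      AEStronglyMeasurable (fun p : Ω × T =>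
        max (-(h p.2)) (min (h p.2) (c p.1 p.2 (U p.1 p.2)))) (P.prod μ) :=
    hh_prod.1.neg.sup (hh_prod.1.inf (hc_meas.comp
      (measurable_fst.prodMk (measurable_snd.prodMk hU))).aestronglyMeasurable)
  exact tendsto_integral_mul_comp_of_tendstoInMeasure
    (fun n => (hcomp_meas (hX_meas n)).integral_prod_right')
    (tendstoInMeasure_integral_comp_of_dominated
      (φ := fun ω t s => max (-(h t)) (min (h t) (c ω t s)))
      (fun n => hcomp_meas (hX_meas n)) (hcomp_meas hZ_meas)
      (fun ω t => continuous_const.max (continuous_const.min (hc_cont ω t)))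
      hh_prod.abs (fun _ _ _ => abs_max_neg_min_le_abs _ _) hXZ)
    hY_int f

/-- **Stable convergence of truncated integral functionals.**
If the jointly measurable processes `X^n` converge to `X^0` in probability in finite
dimension, then for the truncated cost `c^h_t(ω,x) = max (−h_t) (min h_t (c_t(ω,x)))`
with `0 ≤ h ∈ L¹(μ)`, and for every bounded random variable `Y` and bounded Lipschitz
`f : ℝ → ℝ`, one has `E[Y f(I(X^n, c^h))] → E[Y f(I(X^0, c^h))]`. -/
theorem stable_convergence_truncated_integrals
    {Ω : Type*} [MeasurableSpace Ω] (P : Measure Ω) [IsProbabilityMeasure P]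
    {T : Type*} [MeasurableSpace T] (μ : Measure T) [SigmaFinite μ]
    {S : Type*} [MetricSpace S] [CompleteSpace S] [TopologicalSpace.SeparableSpace S]
    [MeasurableSpace S] [BorelSpace S]
    (c : Ω → T → S → ℝ)
    (hc_meas : Measurable fun p : Ω × T × S => c p.1 p.2.1 p.2.2)
    (hc_cont : ∀ ω t, Continuous fun s => c ω t s)
    (X : ℕ → Ω → T → S)
    (hX_meas : ∀ n, Measurable fun p : Ω × T => X n p.1 p.2)
    (h : T → ℝ) (hh_int : Integrable h μ) (hh_nonneg : ∀ t, 0 ≤ h t)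
    -- convergence in probability in finite dimension
    (hfd : ∃ T₀ : Set T, MeasurableSet T₀ ∧ μ T₀ᶜ = 0 ∧
      ∀ (k : ℕ) (t : Fin k → T), (∀ i, t i ∈ T₀) →
        TendstoInMeasure P (fun n ω => fun i => X n ω (t i)) atTop
          (fun ω => fun i => X 0 ω (t i)))
    (Y : Ω → ℝ) (hY_meas : Measurable Y) (hY_bdd : ∃ C : ℝ, ∀ ω, |Y ω| ≤ C)
    (f : ℝ → ℝ) (K : NNReal) (hf_lip : LipschitzWith K f)
    (hf_bdd : ∃ C : ℝ, ∀ x, |f x| ≤ C) :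
    Tendsto
      (fun n => ∫ ω, Y ω *
        f (∫ t, max (-(h t)) (min (h t) (c ω t (X n ω t))) ∂μ) ∂P) atTop
      (𝓝 (∫ ω, Y ω *
        f (∫ t, max (-(h t)) (min (h t) (c ω t (X 0 ω t))) ∂μ) ∂P)) := by
  obtain ⟨T₀, -, hT₀, hconv⟩ := hfd
  obtain ⟨CY, hCY⟩ := hY_bdd
  obtain ⟨Cf, hCf⟩ := hf_bdd
  have hX_ae : ∀ᵐ t ∂μ, TendstoInMeasure P (fun n ω => X n ω t) atTop (fun ω => X 0 ω t) := by
    filter_upwards [mem_ae_iff.2 hT₀] with t ht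
    exact tendstoInMeasure_apply (hconv 1 (fun _ => t) fun _ => ht) 0
  exact stable_convergence_truncated_integrals_general P μ c hc_meas hc_cont X hX_meas (X 0)
    (hX_meas 0) h hh_int hX_ae Y (.of_bound hY_meas.aestronglyMeasurable CY (.of_forall hCY))
    (.ofNormedAddCommGroup f hf_lip.continuous Cf hCf)
end

section
/- Let B be a d×d real symmetric positive definite matrix and define w: ℝ^d → ℝ by w(x) = x^T B x − (x^T B x)²/4 if x^T B x < 2 and w(x) = 1 if x^T B x ≥ 2, and set N = {x ∈ ℝ^d : x^T B x = 2}. Then: (i) w is continuously differentiable on all of ℝ^d; (ii) w is twice continuously differentiable on ℝ^d ∖ N; (iii) for every d×d real symmetric matrix a, on the open set {x : x^T B x < 2} one has ½ Σ_{i,j} a_{ij} ∂²_{ij} w(x) = Tr(aB)·(1 − x^T B x / 2) − x^T B a B x, and on the open set {x : x^T B x > 2} one has ½ Σ_{i,j} a_{ij} ∂²_{ij} w(x) = 0. -/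
open Matrix

/-- Second partial derivative `∂²_{ij} f` of a function on `ℝ^d`. -/
noncomputable def secondPartial {d : ℕ} (f : (Fin d → ℝ) → ℝ) (i j : Fin d)
    (x : Fin d → ℝ) : ℝ :=
  fderiv ℝ (fun y => fderiv ℝ f y (Pi.single j 1)) x (Pi.single i 1)

/-- The function `w(x) = xᵀBx − (xᵀBx)²/4` for `xᵀBx < 2` and `w(x) = 1` otherwise. -/
noncomputable def wFun {d : ℕ} (B : Matrix (Fin d) (Fin d) ℝ) (x : Fin d → ℝ) : ℝ :=
  if x ⬝ᵥ (B *ᵥ x) < 2 then x ⬝ᵥ (B *ᵥ x) - (x ⬝ᵥ (B *ᵥ x)) ^ 2 / 4 else 1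

/-! Write `q x = xᵀBx`. Then `w = g ∘ q`, where `g t = 1 - ((2 - t)⁺)² / 4` is a parabola frozen at
its vertex `t = 2`. Since `s ↦ (s⁺)²` is `C¹`, and smooth away from `0`, (i) and (ii) follow by
composition. For (iii), `∇q = 2Bx` and `∂²_{ij} q = 2B_{ij}` turn the chain rule
`∂²_{ij} (g ∘ q) = g''(q) ∂ᵢq ∂ⱼq + g'(q) ∂²_{ij} q` into
`½ ∑ a_{ij} ∂²_{ij} (g ∘ q) = g'(q) Tr(aB) + 2 g''(q) xᵀBaBx`, with `g'(t) = (2 - t)⁺ / 2`. -/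

theorem posPart_eventuallyEq_id {s : ℝ} (hs : 0 < s) : (fun t : ℝ => t⁺) =ᶠ[nhds s] id := by
  filter_upwards [lt_mem_nhds hs] with t ht using posPart_of_nonneg ht.le

theorem posPart_eventuallyEq_zero {s : ℝ} (hs : s < 0) :
    (fun t : ℝ => t⁺) =ᶠ[nhds s] fun _ => 0 := by
  filter_upwards [gt_mem_nhds hs] with t ht using posPart_of_nonpos ht.le

theorem hasDerivAt_posPart_of_pos {s : ℝ} (hs : 0 < s) : HasDerivAt (fun t : ℝ => t⁺) 1 s :=
  (hasDerivAt_id s).congr_of_eventuallyEq (posPart_eventuallyEq_id hs)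

theorem hasDerivAt_posPart_of_neg {s : ℝ} (hs : s < 0) : HasDerivAt (fun t : ℝ => t⁺) 0 s :=
  (hasDerivAt_const s 0).congr_of_eventuallyEq (posPart_eventuallyEq_zero hs)

theorem contDiffAt_posPart {n : WithTop ℕ∞} {s : ℝ} (hs : s ≠ 0) :
    ContDiffAt ℝ n (fun t : ℝ => t⁺) s := by
  rcases hs.lt_or_gt with neg | pos
  · exact contDiffAt_const.congr_of_eventuallyEq (posPart_eventuallyEq_zero neg)
  · exact contDiffAt_id.congr_of_eventuallyEq (posPart_eventuallyEq_id pos)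

theorem hasDerivAt_posPart_pow {n : ℕ} (hn : n ≠ 0) (s : ℝ) :
    HasDerivAt (fun t : ℝ => t⁺ ^ (n + 1)) ((n + 1) * s⁺ ^ n) s := by
  have continuous_pow (k : ℕ) : Continuous fun t : ℝ => t⁺ ^ k := continuous_posPart.pow k
  have of_ne_zero (t : ℝ) (ht : t ≠ 0) :
      HasDerivAt (fun t : ℝ => t⁺ ^ (n + 1)) ((n + 1) * t⁺ ^ n) t := by
    rcases ht.lt_or_gt with neg | pos
    · simpa [posPart_of_nonpos neg.le, hn] using (hasDerivAt_posPart_of_neg neg).fun_pow (n + 1)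
    · simpa using (hasDerivAt_posPart_of_pos pos).fun_pow (n + 1)
  rcases eq_or_ne s 0 with rfl | hs
  · exact hasDerivAt_of_hasDerivAt_of_ne of_ne_zero (continuous_pow (n + 1)).continuousAt
      (continuous_const.mul (continuous_pow n)).continuousAt
  · exact of_ne_zero s hs

theorem contDiff_posPart_pow (n : ℕ) : ContDiff ℝ n (fun t : ℝ => t⁺ ^ (n + 1)) := by
  induction n with
  | zero => simpa using contDiff_zero (𝕜 := ℝ).mpr (continuous_posPart (α := ℝ))
  | succ n ih =>
    have hasDerivAt := hasDerivAt_posPart_pow n.succ_ne_zero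
    rw [Nat.cast_succ, contDiff_succ_iff_deriv, funext fun s => (hasDerivAt s).deriv]
    exact ⟨fun s => (hasDerivAt s).differentiableAt, by simp, contDiff_const.mul ih⟩

theorem secondPartial_comp {d : ℕ} {g : ℝ → ℝ} {f : (Fin d → ℝ) → ℝ} {x : Fin d → ℝ}
    (hg : ContDiffAt ℝ 2 g (f x)) (hf : ContDiffAt ℝ 2 f x) (i j : Fin d) :
    secondPartial (g ∘ f) i j x =
      deriv (deriv g) (f x) * (fderiv ℝ f x (Pi.single i 1) * fderiv ℝ f x (Pi.single j 1)) +
        deriv g (f x) * secondPartial f i j x := by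
  have partial_comp : (fun y => fderiv ℝ (g ∘ f) y (Pi.single j 1)) =ᶠ[nhds x]
      fun y => deriv g (f y) * fderiv ℝ f y (Pi.single j 1) := by
    filter_upwards [hf.continuousAt.eventually (hg.eventually (by simp)), hf.eventually (by simp)]
      with y hgy hfy
    rw [((hgy.differentiableAt two_ne_zero).hasDerivAt.comp_hasFDerivAt y
      (hfy.differentiableAt two_ne_zero).hasFDerivAt).fderiv]
    simp
  have deriv_comp : HasFDerivAt (fun y => deriv g (f y)) (deriv (deriv g) (f x) • fderiv ℝ f x) x :=
    ((hg.derivWithin (m := 1) le_rfl).differentiableAt one_ne_zero).hasDerivAt.comp_hasFDerivAt x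
      (hf.differentiableAt two_ne_zero).hasFDerivAt
  have partial_f : DifferentiableAt ℝ (fun y => fderiv ℝ f y (Pi.single j 1)) x :=
    ((hf.fderiv_right (m := 1) le_rfl).differentiableAt one_ne_zero).clm_apply
      (differentiableAt_const _)
  rw [secondPartial, partial_comp.fderiv_eq, (deriv_comp.fun_mul partial_f.hasFDerivAt).fderiv,
    secondPartial]
  simp only [_root_.add_apply, _root_.smul_apply, smul_eq_mul]
  ring

theorem contDiff_dotProduct_mulVec {𝕜 ι : Type*} [NontriviallyNormedField 𝕜] [Fintype ι]
    (B : Matrix ι ι 𝕜) {n : WithTop ℕ∞} : ContDiff 𝕜 n (fun x : ι → 𝕜 => x ⬝ᵥ B *ᵥ x) := by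
  unfold Matrix.mulVec dotProduct
  fun_prop

theorem fderiv_dotProduct_mulVec {𝕜 ι : Type*} [NontriviallyNormedField 𝕜] [CompleteSpace 𝕜]
    [Fintype ι] (B : Matrix ι ι 𝕜) (x v : ι → 𝕜) :
    fderiv 𝕜 (fun y : ι → 𝕜 => y ⬝ᵥ B *ᵥ y) x v = (B + Bᵀ) *ᵥ x ⬝ᵥ v := by
  classical
  have quadratic_eq : (fun y : ι → 𝕜 => y ⬝ᵥ B *ᵥ y) =
      fun y => (Matrix.toLinearMap₂' 𝕜 B).toContinuousBilinearMap y y := by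
    simp [toLinearMap₂'_apply']
  rw [quadratic_eq, ContinuousLinearMap.fderiv_of_bilinear _ differentiableAt_fun_id
    differentiableAt_fun_id]
  have transpose_eq : x ⬝ᵥ B *ᵥ v = Bᵀ *ᵥ x ⬝ᵥ v := by
    rw [dotProduct_mulVec, mulVec_transpose]
  simp [toLinearMap₂'_apply', add_mulVec, transpose_eq, dotProduct_comm v, add_comm]

theorem secondPartial_dotProduct_mulVec {d : ℕ} (B : Matrix (Fin d) (Fin d) ℝ) (i j : Fin d)
    (x : Fin d → ℝ) : secondPartial (fun y => y ⬝ᵥ B *ᵥ y) i j x = (B + Bᵀ) i j := by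
  have linear : HasFDerivAt (fun y => ((B + Bᵀ) *ᵥ y) j) _ x :=
    hasFDerivAt_pi'.mp (B + Bᵀ).mulVecLin.toContinuousLinearMap.hasFDerivAt j
  simp only [secondPartial, fderiv_dotProduct_mulVec, dotProduct_single_one]
  rw [linear.fderiv]
  simp [add_comm]

theorem half_sum_mul_secondPartial_comp_dotProduct_mulVec {d : ℕ} (a : Matrix (Fin d) (Fin d) ℝ)
    {B : Matrix (Fin d) (Fin d) ℝ} (hB : B.IsSymm) {g : ℝ → ℝ} {x : Fin d → ℝ}
    (hg : ContDiffAt ℝ 2 g (x ⬝ᵥ B *ᵥ x)) :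
    (1 / 2 : ℝ) * ∑ i, ∑ j, a i j * secondPartial (g ∘ fun y => y ⬝ᵥ B *ᵥ y) i j x =
      deriv g (x ⬝ᵥ B *ᵥ x) * (a * B).trace +
        2 * deriv (deriv g) (x ⬝ᵥ B *ᵥ x) * (x ⬝ᵥ (B * a * B) *ᵥ x) := by
  have trace_eq : (a * B).trace = ∑ i, ∑ j, a i j * B i j := by
    simpa [hB.eq] using (sum_hadamard_eq a B).symm
  have quadratic_eq :
      x ⬝ᵥ (B * a * B) *ᵥ x = ∑ i, ∑ j, a i j * ((B *ᵥ x) i * (B *ᵥ x) j) := by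
    rw [← mulVec_mulVec, ← mulVec_mulVec, dotProduct_mulVec, ← mulVec_transpose, hB.eq,
      dot_mulVec_eq_sum_sum, Finset.sum_comm]
    exact Finset.sum_congr rfl fun i _ => Finset.sum_congr rfl fun j _ => by ring
  have symmetrization_eq : B + Bᵀ = (2 : ℝ) • B := by rw [hB.eq, two_smul]
  rw [trace_eq, quadratic_eq]
  simp only [secondPartial_comp (f := fun y => y ⬝ᵥ B *ᵥ y) hg
      (contDiff_dotProduct_mulVec B).contDiffAt,
    fderiv_dotProduct_mulVec, secondPartial_dotProduct_mulVec, symmetrization_eq, smul_mulVec,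
    dotProduct_single_one, Matrix.smul_apply, Pi.smul_apply, smul_eq_mul, Finset.mul_sum,
    ← Finset.sum_add_distrib]
  exact Finset.sum_congr rfl fun i _ => Finset.sum_congr rfl fun j _ => by ring

/-- The profile `g` through which `w` factors as `w x = g (xᵀBx)`: the parabola `t - t² / 4` up to
its vertex `t = 2`, constant afterwards. -/
noncomputable def cappedParabola (t : ℝ) : ℝ :=
  if t < 2 then t - t ^ 2 / 4 else 1

theorem wFun_eq_cappedParabola_comp {d : ℕ} (B : Matrix (Fin d) (Fin d) ℝ) :
    wFun B = cappedParabola ∘ fun x => x ⬝ᵥ B *ᵥ x :=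
  rfl

theorem cappedParabola_eq_posPart : cappedParabola = fun t => 1 - (2 - t)⁺ ^ 2 / 4 := by
  funext t
  rcases lt_or_ge t 2 with lt | ge
  · rw [cappedParabola, if_pos lt, posPart_of_nonneg (sub_nonneg.mpr lt.le)]
    ring
  · rw [cappedParabola, if_neg ge.not_gt, posPart_of_nonpos (sub_nonpos.mpr ge)]
    ring

theorem contDiff_cappedParabola : ContDiff ℝ 1 cappedParabola := by
  rw [cappedParabola_eq_posPart]
  exact contDiff_const.sub
    (((contDiff_posPart_pow 1).comp (contDiff_const.sub contDiff_id)).div_const 4)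

theorem contDiffAt_cappedParabola {n : WithTop ℕ∞} {t : ℝ} (ht : t ≠ 2) :
    ContDiffAt ℝ n cappedParabola t := by
  have posPart : ContDiffAt ℝ n (fun s : ℝ => (2 - s)⁺) t :=
    (contDiffAt_posPart (sub_ne_zero.mpr ht.symm)).comp t (contDiffAt_const.sub contDiffAt_id)
  rw [cappedParabola_eq_posPart]
  exact contDiffAt_const.sub ((posPart.pow 2).div_const 4)

theorem deriv_cappedParabola (t : ℝ) : deriv cappedParabola t = (2 - t)⁺ / 2 := by
  have sq : HasDerivAt (fun s : ℝ => (2 - s)⁺ ^ 2) (-(2 * (2 - t)⁺)) t := by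
    simpa [one_add_one_eq_two] using
      (hasDerivAt_posPart_pow one_ne_zero (2 - t)).comp_const_sub 2 t
  rw [cappedParabola_eq_posPart, ((sq.div_const 4).const_sub 1).deriv]
  ring

theorem deriv_deriv_cappedParabola_of_lt {t : ℝ} (ht : t < 2) :
    deriv (deriv cappedParabola) t = -1 / 2 := by
  rw [funext deriv_cappedParabola]
  exact (((hasDerivAt_posPart_of_pos (sub_pos.mpr ht)).comp_const_sub 2 t).div_const 2).deriv

theorem deriv_deriv_cappedParabola_of_gt {t : ℝ} (ht : 2 < t) :
    deriv (deriv cappedParabola) t = 0 := by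
  rw [funext deriv_cappedParabola]
  simpa using
    (((hasDerivAt_posPart_of_neg (sub_neg.mpr ht)).comp_const_sub 2 t).div_const 2).deriv

theorem wFun_regularity_and_second_derivative_general {d : ℕ}
    (B : Matrix (Fin d) (Fin d) ℝ) (hB : B.IsSymm) :
    ContDiff ℝ 1 (wFun B) ∧
    ContDiffOn ℝ 2 (wFun B) {x : Fin d → ℝ | x ⬝ᵥ (B *ᵥ x) ≠ 2} ∧
    (∀ a : Matrix (Fin d) (Fin d) ℝ,
      (∀ x : Fin d → ℝ, x ⬝ᵥ (B *ᵥ x) < 2 →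
        (1/2 : ℝ) * ∑ i, ∑ j, a i j * secondPartial (wFun B) i j x
          = (a * B).trace * (1 - (x ⬝ᵥ (B *ᵥ x)) / 2) - x ⬝ᵥ ((B * a * B) *ᵥ x)) ∧
      (∀ x : Fin d → ℝ, 2 < x ⬝ᵥ (B *ᵥ x) →
        (1/2 : ℝ) * ∑ i, ∑ j, a i j * secondPartial (wFun B) i j x = 0)) := by
  rw [wFun_eq_cappedParabola_comp]
  refine ⟨contDiff_cappedParabola.comp (contDiff_dotProduct_mulVec B), fun x hx => ?_,
    fun a => ⟨fun x hx => ?_, fun x hx => ?_⟩⟩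
  · exact ((contDiffAt_cappedParabola hx).comp x
      (contDiff_dotProduct_mulVec B).contDiffAt).contDiffWithinAt
  · rw [half_sum_mul_secondPartial_comp_dotProduct_mulVec a hB (contDiffAt_cappedParabola hx.ne),
      deriv_deriv_cappedParabola_of_lt hx, deriv_cappedParabola,
      posPart_of_nonneg (sub_nonneg.mpr hx.le)]
    ring
  · rw [half_sum_mul_secondPartial_comp_dotProduct_mulVec a hB (contDiffAt_cappedParabola hx.ne'),
      deriv_deriv_cappedParabola_of_gt hx, deriv_cappedParabola,
      posPart_of_nonpos (sub_nonpos.mpr hx.le)]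
    ring

/-- **Regularity and second-order identities for the truncated quadratic `w`.**
(i) `w ∈ C¹(ℝ^d)`; (ii) `w ∈ C²(ℝ^d ∖ N)` where `N = {x : xᵀBx = 2}`;
(iii) for any symmetric `a`, `½ Σ a_{ij} ∂²_{ij} w = Tr(aB)(1 − xᵀBx/2) − xᵀBaBx`
on `{xᵀBx < 2}`, and `½ Σ a_{ij} ∂²_{ij} w = 0` on `{xᵀBx > 2}`. -/
theorem wFun_regularity_and_second_derivative {d : ℕ}
    (B : Matrix (Fin d) (Fin d) ℝ) (hB : B.PosDef) :
    ContDiff ℝ 1 (wFun B) ∧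
    ContDiffOn ℝ 2 (wFun B) {x : Fin d → ℝ | x ⬝ᵥ (B *ᵥ x) ≠ 2} ∧
    (∀ a : Matrix (Fin d) (Fin d) ℝ, a.IsSymm →
      (∀ x : Fin d → ℝ, x ⬝ᵥ (B *ᵥ x) < 2 →
        (1/2 : ℝ) * ∑ i, ∑ j, a i j * secondPartial (wFun B) i j x
          = (a * B).trace * (1 - (x ⬝ᵥ (B *ᵥ x)) / 2) - x ⬝ᵥ ((B * a * B) *ᵥ x)) ∧
      (∀ x : Fin d → ℝ, 2 < x ⬝ᵥ (B *ᵥ x) →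
        (1/2 : ℝ) * ∑ i, ∑ j, a i j * secondPartial (wFun B) i j x = 0)) := by
  obtain ⟨contDiff, contDiffOn, trace_identity⟩ :=
    wFun_regularity_and_second_derivative_general B (isHermitian_iff_isSymm.mp hB.isHermitian)
  exact ⟨contDiff, contDiffOn, fun a _ => trace_identity a⟩
end

section
/- Let a be a d×d real symmetric positive semidefinite matrix, Q and D d×d real symmetric positive definite matrices, r > 0, l > 0, and let G be a d×d real symmetric positive definite matrix with G Q⁻¹ G = r·l·D. Define w(x) = x^T G x. Then for every x ∈ ℝ^d, inf_{u ∈ ℝ^d} [ ½ Σ_{i,j} a_{ij} ∂²_{ij} w(x) + u·∇w(x) + l·u^T Q u + r·x^T D x ] = Tr(aG), and the infimum is attained at u*(x) = −(1/l) Q⁻¹ G x. Equivalently, for every x ∈ ℝ^d, inf_{u ∈ ℝ^d} ( 2⟨u, Gx⟩ + l·u^T Q u ) = −(1/l)(Gx)^T Q⁻¹ (Gx) = −r·x^T D x. -/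
open Matrix

/-! For symmetric `G`, the Hessian term equals `Tr(aG)` whatever the control is, so the minimization
only involves the quadratic polynomial `2⟨u, Gx⟩ + l uᵀQu` in `u`. Completing the square around its
critical point `v = -(1/l) Q⁻¹Gx` shows that its minimum is `⟨v, Gx⟩ = -(1/l) xᵀGQ⁻¹Gx`, and
`G Q⁻¹ G = r l D` is exactly the condition for this to cancel the running cost `r xᵀDx`. -/

lemma dotProduct_mulVec_comm_of_isSymm {n R : Type*} [Fintype n] [CommSemiring R]
    {S : Matrix n n R} (hS : S.IsSymm) (x y : n → R) :
    x ⬝ᵥ (S *ᵥ y) = y ⬝ᵥ (S *ᵥ x) := by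
  rw [dotProduct_mulVec, ← mulVec_transpose, hS.eq, dotProduct_comm]

section CompletingTheSquare

variable {n R : Type*} [Fintype n] [CommRing R] {S : Matrix n n R} {p v : n → R}

lemma two_mul_dotProduct_add_dotProduct_mulVec_eq_add_sub (hS : S.IsSymm) (hv : S *ᵥ v = -p)
    (u : n → R) :
    2 * (u ⬝ᵥ p) + u ⬝ᵥ (S *ᵥ u) = v ⬝ᵥ p + (u - v) ⬝ᵥ (S *ᵥ (u - v)) := by
  have hvu : v ⬝ᵥ (S *ᵥ u) = -(u ⬝ᵥ p) := by
    rw [dotProduct_mulVec_comm_of_isSymm hS, hv, dotProduct_neg]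
  simp only [mulVec_sub, sub_dotProduct, dotProduct_sub, hvu, hv, dotProduct_neg]
  ring

lemma two_mul_dotProduct_add_dotProduct_mulVec_of_mulVec_eq_neg (hv : S *ᵥ v = -p) :
    2 * (v ⬝ᵥ p) + v ⬝ᵥ (S *ᵥ v) = v ⬝ᵥ p := by
  rw [hv, dotProduct_neg]
  ring

lemma isLeast_two_mul_dotProduct_add_dotProduct_mulVec [PartialOrder R] [AddLeftMono R]
    [StarRing R] [TrivialStar R] (hS : S.PosSemidef) (hv : S *ᵥ v = -p) :
    IsLeast {y | ∃ u, y = 2 * (u ⬝ᵥ p) + u ⬝ᵥ (S *ᵥ u)} (v ⬝ᵥ p) := by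
  refine ⟨⟨v, (two_mul_dotProduct_add_dotProduct_mulVec_of_mulVec_eq_neg hv).symm⟩, ?_⟩
  rintro _ ⟨u, rfl⟩
  have hsymm : S.IsSymm := isHermitian_iff_isSymm.mp hS.isHermitian
  rw [two_mul_dotProduct_add_dotProduct_mulVec_eq_add_sub hsymm hv]
  exact le_add_of_nonneg_right (by simpa using hS.dotProduct_mulVec_nonneg (u - v))

end CompletingTheSquare

lemma mulVec_dotProduct_mulVec_mulVec {k l m n R : Type*} [Fintype k] [Fintype l] [Fintype m]
    [Fintype n] [CommSemiring R] (A : Matrix k l R) (B : Matrix k m R) (C : Matrix m n R)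
    (x : l → R) (y : n → R) :
    (A *ᵥ x) ⬝ᵥ (B *ᵥ (C *ᵥ y)) = x ⬝ᵥ ((Aᵀ * B * C) *ᵥ y) := by
  rw [← vecMul_transpose, ← dotProduct_mulVec, mulVec_mulVec, mulVec_mulVec, Matrix.mul_assoc]

lemma smul_mulVec_neg_one_div_smul_inv_mulVec {n K : Type*} [Fintype n] [DecidableEq n] [Field K]
    {Q : Matrix n n K} (hQ : IsUnit Q) {l : K} (hl : l ≠ 0) (p : n → K) :
    (l • Q) *ᵥ ((-(1/l)) • (Q⁻¹ *ᵥ p)) = -p := by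
  rw [smul_mulVec, mulVec_smul, mulVec_mulVec, mul_nonsing_inv _ ((isUnit_iff_isUnit_det Q).mp hQ),
    one_mulVec, smul_smul, mul_neg, mul_one_div_cancel hl, neg_one_smul]

section Derivatives

variable {n 𝕜 : Type*} [Fintype n] [NontriviallyNormedField 𝕜] [CompleteSpace 𝕜]

lemma fderiv_dotProduct_mulVec_self_apply (G : Matrix n n 𝕜) (x u : n → 𝕜) :
    fderiv 𝕜 (fun z => z ⬝ᵥ (G *ᵥ z)) x u = u ⬝ᵥ ((G + Gᵀ) *ᵥ x) := by
  classical
  let B := G.toBilin'.toContinuousBilinearMap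
  have hB (y z : n → 𝕜) : B y z = y ⬝ᵥ (G *ᵥ z) := toBilin'_apply' G y z
  have hderiv := B.hasFDerivAt_of_bilinear (hasFDerivAt_id x) (hasFDerivAt_id x)
  simp only [id, hB] at hderiv
  calc fderiv 𝕜 (fun z => z ⬝ᵥ (G *ᵥ z)) x u
      = x ⬝ᵥ (G *ᵥ u) + u ⬝ᵥ (G *ᵥ x) := by simp [hderiv.fderiv, hB]
    _ = u ⬝ᵥ ((G + Gᵀ) *ᵥ x) := by
      rw [dotProduct_mulVec x, ← mulVec_transpose, dotProduct_comm, ← dotProduct_add,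
        ← add_mulVec, add_comm]

lemma fderiv_dotProduct_mulVec_self_apply_of_isSymm {G : Matrix n n 𝕜} (hG : G.IsSymm)
    (x u : n → 𝕜) :
    fderiv 𝕜 (fun z => z ⬝ᵥ (G *ᵥ z)) x u = 2 * (u ⬝ᵥ (G *ᵥ x)) := by
  rw [fderiv_dotProduct_mulVec_self_apply, hG.eq, add_mulVec, dotProduct_add, two_mul]

variable {d : ℕ}

lemma secondPartial_dotProduct_mulVec_self (G : Matrix (Fin d) (Fin d) ℝ) (i j : Fin d)
    (x : Fin d → ℝ) :
    secondPartial (fun z => z ⬝ᵥ (G *ᵥ z)) i j x = G i j + G j i := by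
  let L := (G + Gᵀ).toBilin'.toContinuousBilinearMap (Pi.single j 1)
  have hL (y : Fin d → ℝ) : fderiv ℝ (fun z => z ⬝ᵥ (G *ᵥ z)) y (Pi.single j 1) = L y := by
    rw [fderiv_dotProduct_mulVec_self_apply]
    exact (toBilin'_apply' _ _ _).symm
  simp only [secondPartial, hL]
  rw [L.fderiv]
  simp [L, add_comm]

lemma half_sum_mul_secondPartial_dotProduct_mulVec_self {G : Matrix (Fin d) (Fin d) ℝ}
    (hG : G.IsSymm) (a : Matrix (Fin d) (Fin d) ℝ) (x : Fin d → ℝ) :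
    (1/2 : ℝ) * ∑ i, ∑ j, a i j * secondPartial (fun z => z ⬝ᵥ (G *ᵥ z)) i j x
      = (a * G).trace := by
  simp only [secondPartial_dotProduct_mulVec_self, trace, diag, mul_apply, Finset.mul_sum]
  refine Finset.sum_congr rfl fun i _ => Finset.sum_congr rfl fun j _ => ?_
  rw [hG.apply i j]
  ring

end Derivatives

theorem hjb_quadratic_solution_general {d : ℕ}
    (a Q D G : Matrix (Fin d) (Fin d) ℝ) (hQ : Q.PosDef) (hG : G.IsSymm)
    (r l : ℝ) (hl : 0 < l) (hGQ : G * Q⁻¹ * G = (r * l) • D) :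
    ∀ x : Fin d → ℝ,
      (IsLeast {y : ℝ | ∃ u : Fin d → ℝ,
          y = (1/2 : ℝ) * ∑ i, ∑ j, a i j *
                secondPartial (fun z => z ⬝ᵥ (G *ᵥ z)) i j x
              + fderiv ℝ (fun z => z ⬝ᵥ (G *ᵥ z)) x u
              + l * (u ⬝ᵥ (Q *ᵥ u)) + r * (x ⬝ᵥ (D *ᵥ x))}
        ((a * G).trace)) ∧
      ((1/2 : ℝ) * ∑ i, ∑ j, a i j *
            secondPartial (fun z => z ⬝ᵥ (G *ᵥ z)) i j x
          + fderiv ℝ (fun z => z ⬝ᵥ (G *ᵥ z)) x ((-(1/l)) • (Q⁻¹ *ᵥ (G *ᵥ x)))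
          + l * (((-(1/l)) • (Q⁻¹ *ᵥ (G *ᵥ x))) ⬝ᵥ (Q *ᵥ ((-(1/l)) • (Q⁻¹ *ᵥ (G *ᵥ x)))))
          + r * (x ⬝ᵥ (D *ᵥ x)) = (a * G).trace) ∧
      (IsLeast {y : ℝ | ∃ u : Fin d → ℝ,
          y = 2 * (u ⬝ᵥ (G *ᵥ x)) + l * (u ⬝ᵥ (Q *ᵥ u))}
        (-(1/l) * ((G *ᵥ x) ⬝ᵥ (Q⁻¹ *ᵥ (G *ᵥ x))))) ∧
      (-(1/l) * ((G *ᵥ x) ⬝ᵥ (Q⁻¹ *ᵥ (G *ᵥ x))) = -(r * (x ⬝ᵥ (D *ᵥ x)))) := by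
  intro x
  set v := (-(1/l)) • (Q⁻¹ *ᵥ (G *ᵥ x)) with hv_def
  have hv : (l • Q) *ᵥ v = -(G *ᵥ x) :=
    smul_mulVec_neg_one_div_smul_inv_mulVec hQ.isUnit hl.ne' _
  have hmin_eq : -(1/l) * ((G *ᵥ x) ⬝ᵥ (Q⁻¹ *ᵥ (G *ᵥ x))) = v ⬝ᵥ (G *ᵥ x) := by
    rw [hv_def, smul_dotProduct, dotProduct_comm, smul_eq_mul]
  have hbalance : -(1/l) * ((G *ᵥ x) ⬝ᵥ (Q⁻¹ *ᵥ (G *ᵥ x))) = -(r * (x ⬝ᵥ (D *ᵥ x))) := by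
    rw [mulVec_dotProduct_mulVec_mulVec, hG.eq, hGQ, smul_mulVec, dotProduct_smul, smul_eq_mul]
    field_simp
  have hcontrol (u : Fin d → ℝ) : l * (u ⬝ᵥ (Q *ᵥ u)) = u ⬝ᵥ ((l • Q) *ᵥ u) := by
    rw [smul_mulVec, dotProduct_smul, smul_eq_mul]
  have hattained := two_mul_dotProduct_add_dotProduct_mulVec_of_mulVec_eq_neg hv
  have hleast := isLeast_two_mul_dotProduct_add_dotProduct_mulVec (hQ.posSemidef.smul hl.le) hv
  simp only [half_sum_mul_secondPartial_dotProduct_mulVec_self hG,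
    fderiv_dotProduct_mulVec_self_apply_of_isSymm hG, hcontrol, hmin_eq] at hbalance ⊢
  refine ⟨⟨⟨v, by linarith⟩, ?_⟩, by linarith, hleast, hbalance⟩
  rintro _ ⟨u, rfl⟩
  linarith [hleast.2 ⟨u, rfl⟩]

/-- **The quadratic `w(x) = xᵀGx` solves the ergodic HJB equation.**
With `G ≻ 0` satisfying `G Q⁻¹ G = r·l·D`, for every `x`:
`inf_u [½ Σ a_{ij} ∂²_{ij} w(x) + u·∇w(x) + l uᵀQu + r xᵀDx] = Tr(aG)`, the infimum
being attained at `u*(x) = −(1/l) Q⁻¹ G x`; equivalently,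
`inf_u (2⟨u, Gx⟩ + l uᵀQu) = −(1/l)(Gx)ᵀQ⁻¹(Gx) = −r xᵀDx`. -/
theorem hjb_quadratic_solution {d : ℕ}
    (a Q D G : Matrix (Fin d) (Fin d) ℝ)
    (ha : a.PosSemidef) (hQ : Q.PosDef) (hD : D.PosDef) (hG : G.PosDef)
    (r l : ℝ) (hr : 0 < r) (hl : 0 < l)
    (hGQ : G * Q⁻¹ * G = (r * l) • D) :
    ∀ x : Fin d → ℝ,
      (IsLeast {y : ℝ | ∃ u : Fin d → ℝ,
          y = (1/2 : ℝ) * ∑ i, ∑ j, a i j *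
                secondPartial (fun z => z ⬝ᵥ (G *ᵥ z)) i j x
              + fderiv ℝ (fun z => z ⬝ᵥ (G *ᵥ z)) x u
              + l * (u ⬝ᵥ (Q *ᵥ u)) + r * (x ⬝ᵥ (D *ᵥ x))}
        ((a * G).trace)) ∧
      ((1/2 : ℝ) * ∑ i, ∑ j, a i j *
            secondPartial (fun z => z ⬝ᵥ (G *ᵥ z)) i j x
          + fderiv ℝ (fun z => z ⬝ᵥ (G *ᵥ z)) x ((-(1/l)) • (Q⁻¹ *ᵥ (G *ᵥ x)))
          + l * (((-(1/l)) • (Q⁻¹ *ᵥ (G *ᵥ x))) ⬝ᵥ (Q *ᵥ ((-(1/l)) • (Q⁻¹ *ᵥ (G *ᵥ x)))))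
          + r * (x ⬝ᵥ (D *ᵥ x)) = (a * G).trace) ∧
      (IsLeast {y : ℝ | ∃ u : Fin d → ℝ,
          y = 2 * (u ⬝ᵥ (G *ᵥ x)) + l * (u ⬝ᵥ (Q *ᵥ u))}
        (-(1/l) * ((G *ᵥ x) ⬝ᵥ (Q⁻¹ *ᵥ (G *ᵥ x))))) ∧
      (-(1/l) * ((G *ᵥ x) ⬝ᵥ (Q⁻¹ *ᵥ (G *ᵥ x))) = -(r * (x ⬝ᵥ (D *ᵥ x)))) :=
  hjb_quadratic_solution_general a Q D G hQ (isHermitian_iff_isSymm.mp hG.isHermitian) r l hl hGQ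
end

section
/- Let r > 0, l > 0, a > 0 be real numbers, set Σ = √(r/l) and σ² = a/(2Σ), and let π be the centered Gaussian measure on ℝ with variance σ². Then: (i) for every f ∈ C²_c(ℝ), ∫_ℝ [ (a/2)·f''(x) − Σ·x·f'(x) ] π(dx) = 0, i.e. π is an invariant (stationary) measure for the generator of the Ornstein–Uhlenbeck process dX_t = √a dW_t − Σ X_t dt; and (ii) ∫_ℝ ( r·x² + l·(Σx)² ) π(dx) = a·√(r·l), i.e. the linear feedback control u(x) = −Σx achieves the cost value a√(rl). -/
open MeasureTheory ProbabilityTheory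

/-!
The density `φ` of the Gaussian law with mean `μ` and variance `v` satisfies
`φ' = -((x - μ) / v) φ`. Integrating the derivative of `φ g` therefore gives Stein's identity
`∫ (x - μ) g dπ = v ∫ g' dπ`; with `g = f'` this is stationarity for the Ornstein–Uhlenbeck
generator, since `Σ σ² = a / 2`. The gain `Σ = √(r / l)` balances the two parts of the cost,
`l (Σ x)² = r x²`, so the mean cost is `2 r σ² = a r / Σ = a √(r l)`.
-/

open scoped NNReal

section Stein

variable {E : Type*} [NormedAddCommGroup E] [NormedSpace ℝ E] {μ : ℝ} {v : ℝ≥0}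

theorem integrable_of_integrable_sub_smul {γ : Measure ℝ} {g : ℝ → E} (c : ℝ)
    (hg : LocallyIntegrable g γ) (hcg : Integrable (fun x ↦ (x - c) • g x) γ) :
    Integrable g γ := by
  have near : IntegrableOn g (Metric.closedBall c 1) γ :=
    hg.integrableOn_isCompact (isCompact_closedBall c 1)
  have far : IntegrableOn g (Metric.closedBall c 1)ᶜ γ := by
    refine Integrable.mono hcg.integrableOn hg.aestronglyMeasurable.restrict ?_
    refine ae_restrict_of_forall_mem measurableSet_closedBall.compl fun x hx ↦ ?_
    have one_le_dist : 1 ≤ ‖x - c‖ := by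
      rw [← dist_eq_norm]
      exact (not_le.mp (mt Metric.mem_closedBall.mpr hx)).le
    simpa only [norm_smul] using le_mul_of_one_le_left (norm_nonneg (g x)) one_le_dist
  simpa only [integrableOn_univ, Set.union_compl_self] using near.union far

theorem hasDerivAt_gaussianPDFReal (μ : ℝ) (v : ℝ≥0) (x : ℝ) :
    HasDerivAt (gaussianPDFReal μ v) (-((x - μ) / v) * gaussianPDFReal μ v x) x := by
  have exponent : HasDerivAt (fun y : ℝ ↦ -(y - μ) ^ 2 / (2 * v)) (-((x - μ) / v)) x := by
    refine ((((hasDerivAt_id' x).sub_const μ).fun_pow 2).neg.div_const (2 * (v : ℝ))).congr_deriv ?_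
    rw [← mul_div_mul_left (x - μ) (v : ℝ) two_ne_zero]
    ring
  rw [gaussianPDFReal_def]
  exact (exponent.exp.const_mul _).congr_deriv (by ring)

theorem integrable_gaussianReal_iff (hv : v ≠ 0) {g : ℝ → E} :
    Integrable g (gaussianReal μ v) ↔ Integrable (fun x ↦ gaussianPDFReal μ v x • g x) := by
  rw [gaussianReal_of_var_ne_zero μ hv, integrable_withDensity_iff_integrable_smul'
    (measurable_gaussianPDF μ v) (ae_of_all _ fun _ ↦ gaussianPDF_lt_top)]
  simp only [toReal_gaussianPDF]

theorem integral_sub_smul_gaussianReal {g g' : ℝ → E} (hg : ∀ x, HasDerivAt g (g' x) x)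
    (hxg : Integrable (fun x ↦ (x - μ) • g x) (gaussianReal μ v))
    (hg' : Integrable g' (gaussianReal μ v)) :
    ∫ x, (x - μ) • g x ∂gaussianReal μ v = (v : ℝ) • ∫ x, g' x ∂gaussianReal μ v := by
  rcases eq_or_ne v 0 with rfl | hv
  · have integrand_eq_zero : ∀ᵐ x ∂gaussianReal μ 0, (x - μ) • g x = 0 := by
      simp [gaussianReal_zero_var]
    rw [integral_eq_zero_of_ae integrand_eq_zero, NNReal.coe_zero, zero_smul]
  have hv' : (v : ℝ) ≠ 0 := NNReal.coe_ne_zero.mpr hv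
  have integrable_g : Integrable g (gaussianReal μ v) :=
    integrable_of_integrable_sub_smul μ
      (continuous_iff_continuousAt.mpr fun x ↦ (hg x).continuousAt).locallyIntegrable hxg
  have integrable_score : Integrable (fun x ↦ (v : ℝ)⁻¹ • (x - μ) • g x) (gaussianReal μ v) :=
    hxg.smul _
  have product_deriv (x : ℝ) : HasDerivAt (fun y ↦ gaussianPDFReal μ v y • g y)
      (gaussianPDFReal μ v x • (g' x - (v : ℝ)⁻¹ • (x - μ) • g x)) x :=
    ((hasDerivAt_gaussianPDFReal μ v x).smul (hg x)).congr_deriv (by module)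
  have integral_product_deriv : ∫ x, (g' x - (v : ℝ)⁻¹ • (x - μ) • g x) ∂gaussianReal μ v = 0 := by
    rw [integral_gaussianReal_eq_integral_smul hv]
    exact integral_eq_zero_of_hasDerivAt_of_integrable product_deriv
      ((integrable_gaussianReal_iff hv).mp (hg'.sub integrable_score))
      ((integrable_gaussianReal_iff hv).mp integrable_g)
  rw [integral_sub hg' integrable_score, integral_smul, sub_eq_zero] at integral_product_deriv
  rw [integral_product_deriv, smul_inv_smul₀ hv']

end Stein

/-- The generator `f ↦ (a / 2) f'' - θ x f'` of the Ornstein–Uhlenbeck process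
`dX = √a dW - θ X dt`; a law `π` is stationary when its integral against `π` vanishes for all test
functions `f`. The derivatives are `deriv`, so the value is meaningful only where `f` is twice
differentiable. -/
noncomputable def ornsteinUhlenbeckGenerator (a θ : ℝ) (f : ℝ → ℝ) (x : ℝ) : ℝ :=
  a / 2 * deriv (deriv f) x - θ * x * deriv f x

theorem integral_ornsteinUhlenbeckGenerator_gaussianReal_eq_zero {a θ : ℝ} {v : ℝ≥0}
    (hv : θ * v = a / 2) {f : ℝ → ℝ} (hf : Differentiable ℝ (deriv f))
    (hxf : Integrable (fun x ↦ x * deriv f x) (gaussianReal 0 v))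
    (hf'' : Integrable (deriv (deriv f)) (gaussianReal 0 v)) :
    ∫ x, ornsteinUhlenbeckGenerator a θ f x ∂gaussianReal 0 v = 0 := by
  have stein : ∫ x, x * deriv f x ∂gaussianReal 0 v
      = v * ∫ x, deriv (deriv f) x ∂gaussianReal 0 v := by
    simpa only [sub_zero, smul_eq_mul] using integral_sub_smul_gaussianReal (μ := 0)
      (fun x ↦ (hf x).hasDerivAt) (by simpa only [sub_zero, smul_eq_mul] using hxf) hf''
  simp only [ornsteinUhlenbeckGenerator, mul_assoc]
  rw [integral_sub (hf''.const_mul _) (hxf.const_mul _), integral_const_mul, integral_const_mul,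
    stein, ← hv]
  ring

theorem integral_sq_gaussianReal (μ : ℝ) (v : ℝ≥0) :
    ∫ x, x ^ 2 ∂gaussianReal μ v = μ ^ 2 + v := by
  have variance_eq := variance_eq_sub (memLp_id_gaussianReal (μ := μ) (v := v) 2)
  simp only [variance_id_gaussianReal, Pi.pow_apply, id_eq, integral_id_gaussianReal] at variance_eq
  linarith

theorem integral_linear_feedback_cost_gaussianReal (r l k μ : ℝ) (v : ℝ≥0) :
    ∫ x, (r * x ^ 2 + l * (k * x) ^ 2) ∂gaussianReal μ v = (r + l * k ^ 2) * (μ ^ 2 + v) := by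
  rw [← integral_sq_gaussianReal, ← integral_const_mul]
  congr with x
  ring

theorem div_sqrt_div_eq_sqrt_mul {r : ℝ} (hr : 0 ≤ r) (l : ℝ) : r / √(r / l) = √(r * l) := by
  rw [Real.sqrt_div hr, div_div_eq_mul_div, mul_div_right_comm, Real.div_sqrt, Real.sqrt_mul hr]

section CompactSupport

variable {E : Type*} [NormedAddCommGroup E] [NormedSpace ℝ E] {γ : Measure ℝ}
  [IsFiniteMeasureOnCompacts γ] {f : ℝ → E}

theorem integrable_smul_deriv_of_hasCompactSupport {p : ℝ → ℝ} (hp : Continuous p)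
    (hf : ContDiff ℝ 1 f) (hfc : HasCompactSupport f) : Integrable (fun x ↦ p x • deriv f x) γ :=
  (hp.smul hf.continuous_deriv_one).integrable_of_hasCompactSupport hfc.deriv.smul_left

theorem integrable_deriv_deriv_of_hasCompactSupport (hf : ContDiff ℝ 2 f)
    (hfc : HasCompactSupport f) : Integrable (deriv (deriv f)) γ := by
  have hf' : ContDiff ℝ 1 (deriv f) := ContDiff.deriv' (by rwa [one_add_one_eq_two])
  exact hf'.continuous_deriv_one.integrable_of_hasCompactSupport hfc.deriv.deriv

end CompactSupport

theorem ou_feedback_gaussian_cost_general (r l a : ℝ) (hr : 0 < r) (hl : 0 < l) (ha : 0 < a) :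
    (∀ f : ℝ → ℝ, Differentiable ℝ f → Differentiable ℝ (deriv f) →
      Integrable (fun x ↦ x * deriv f x)
        (gaussianReal 0 (Real.toNNReal (a / (2 * Real.sqrt (r / l))))) →
      Integrable (deriv (deriv f))
        (gaussianReal 0 (Real.toNNReal (a / (2 * Real.sqrt (r / l))))) →
      ∫ x, ((a / 2) * deriv (deriv f) x - Real.sqrt (r / l) * x * deriv f x)
        ∂(gaussianReal 0 (Real.toNNReal (a / (2 * Real.sqrt (r / l))))) = 0) ∧
    (∫ x, (r * x ^ 2 + l * (Real.sqrt (r / l) * x) ^ 2)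
        ∂(gaussianReal 0 (Real.toNNReal (a / (2 * Real.sqrt (r / l)))))
      = a * Real.sqrt (r * l)) := by
  have gain_pos : 0 < √(r / l) := Real.sqrt_pos.mpr (div_pos hr hl)
  have variance_eq : ((a / (2 * √(r / l))).toNNReal : ℝ) = a / (2 * √(r / l)) :=
    Real.coe_toNNReal _ (div_pos ha (mul_pos two_pos gain_pos)).le
  refine ⟨fun f _ hf' hxf' hf'' ↦ ?_, ?_⟩
  · refine integral_ornsteinUhlenbeckGenerator_gaussianReal_eq_zero ?_ hf' hxf' hf''
    rw [variance_eq]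
    field_simp
  · have balance : l * √(r / l) ^ 2 = r := by
      rw [Real.sq_sqrt (div_pos hr hl).le, mul_div_cancel₀ r hl.ne']
    rw [integral_linear_feedback_cost_gaussianReal, balance, variance_eq,
      ← div_sqrt_div_eq_sqrt_mul hr.le]
    field_simp
    ring

/-- **The Gaussian stationary measure of the optimal Ornstein–Uhlenbeck feedback.**
With `Σ = √(r/l)` and `σ² = a/(2Σ)`, the centered Gaussian `π` with variance `σ²`
satisfies: (i) `∫ [(a/2) f''(x) − Σ x f'(x)] dπ = 0` for every `f ∈ C²_c(ℝ)`
(stationarity for the OU generator), and (ii) `∫ (r x² + l (Σx)²) dπ = a√(rl)`. -/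
theorem ou_feedback_gaussian_cost (r l a : ℝ) (hr : 0 < r) (hl : 0 < l) (ha : 0 < a) :
    (∀ f : ℝ → ℝ, ContDiff ℝ 2 f → HasCompactSupport f →
      ∫ x, ((a / 2) * deriv (deriv f) x - Real.sqrt (r / l) * x * deriv f x)
        ∂(gaussianReal 0 (Real.toNNReal (a / (2 * Real.sqrt (r / l))))) = 0) ∧
    (∫ x, (r * x ^ 2 + l * (Real.sqrt (r / l) * x) ^ 2)
        ∂(gaussianReal 0 (Real.toNNReal (a / (2 * Real.sqrt (r / l)))))
      = a * Real.sqrt (r * l)) := by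
  exact (ou_feedback_gaussian_cost_general r l a hr hl ha).imp_left fun stationary f hf hfc ↦
    stationary f (hf.differentiable two_ne_zero) hf.differentiable_deriv_two
      (integrable_smul_deriv_of_hasCompactSupport continuous_id (hf.of_le one_le_two) hfc)
      (integrable_deriv_deriv_of_hasCompactSupport hf hfc)
end

section
/- Let G be a bounded open subset of ℝ^d with boundary ∂G, let V: ℝ^d → ℝ be twice continuously differentiable with V(x) = 0 for every x ∈ ∂G, and let γ: ∂G → ℝ^d be continuous with γ(x)·∇V(x) < 0 for every x ∈ ∂G. Then any finite signed Borel measure ρ on ℝ^d that is supported on ∂G and satisfies ∫_{∂G} γ(x)·∇f(x) ρ(dx) = 0 for every f ∈ C²_c(ℝ^d) must be the zero measure. -/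
open MeasureTheory Matrix

/-!
Test the constraint with `f = g * V`, where `g` is smooth and compactly supported. Since `V = 0` on
`∂G`, only one term of the product rule survives there, so `γ · ∇f = g * (γ · ∇V)` and the
constraint says that the signed measure `(γ · ∇V) ρ` annihilates every `g`. Hence
`γ · ∇V = 0` holds `|ρ|`-almost everywhere; as `γ · ∇V` does not vanish on `∂G`, which carries `ρ`,
this forces `|ρ| = 0`.
-/

open scoped ContDiff Topology

section Fderiv

variable {𝕜 E F : Type*} [NontriviallyNormedField 𝕜] [NormedAddCommGroup E] [NormedSpace 𝕜 E]
  [NormedAddCommGroup F] [NormedSpace 𝕜 F]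

theorem fderiv_smul_eq_of_eq_zero {c : E → 𝕜} {f : E → F} {x : E} (hc : DifferentiableAt 𝕜 c x)
    (hf : DifferentiableAt 𝕜 f x) (hfx : f x = 0) :
    fderiv 𝕜 (c • f) x = c x • fderiv 𝕜 f x := by
  simp [fderiv_smul hc hf, hfx]

end Fderiv

section LocallyIntegrable

variable {X 𝕜 E F : Type*} [TopologicalSpace X] [MeasurableSpace X] [OpensMeasurableSpace X]
  [NontriviallyNormedField 𝕜] [NormedAddCommGroup E] [NormedSpace 𝕜 E] [NormedAddCommGroup F]
  [NormedSpace 𝕜 F] {μ : Measure X}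

theorem locallyIntegrable_clm_apply_of_continuous
    [SecondCountableTopologyEither X (E →L[𝕜] F)] {A : X → E →L[𝕜] F} {v : X → E}
    (hA : Continuous A) (hv : LocallyIntegrable v μ) :
    LocallyIntegrable (fun x => A x (v x)) μ := by
  intro x
  obtain ⟨s, hs, hvs⟩ := hv x
  have hbound : ∀ᶠ y in 𝓝 x, ‖A y‖ < ‖A x‖ + 1 :=
    hA.norm.continuousAt.eventually_lt_const (lt_add_one _)
  obtain ⟨t, htA, ht, hxt⟩ := eventually_nhds_iff.1 hbound
  refine ⟨s ∩ t, Filter.inter_mem hs (ht.mem_nhds hxt), ?_⟩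
  have hvst : IntegrableOn v (s ∩ t) μ := hvs.mono_set Set.inter_subset_left
  refine (hvst.norm.const_mul (‖A x‖ + 1)).mono'
    (isBoundedBilinearMap_apply.continuous.comp_aestronglyMeasurable₂
      hA.aestronglyMeasurable hvst.aestronglyMeasurable) ?_
  filter_upwards [ae_restrict_of_ae_restrict_of_subset Set.inter_subset_right
    (ae_restrict_mem ht.measurableSet)] with y hy
  exact (A y).le_of_opNorm_le (htA y hy).le (v y)

theorem integrable_of_continuousOn_isCompact_of_ae_mem [T2Space X]
    [IsFiniteMeasureOnCompacts μ] {f : X → E} {K : Set X} (hf : ContinuousOn f K) (hK : IsCompact K)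
    (hμ : ∀ᵐ x ∂μ, x ∈ K) :
    Integrable f μ := by
  rw [← Measure.restrict_eq_self_of_ae_mem hμ]
  exact hf.integrableOn_compact hK

end LocallyIntegrable

section FiniteDimensional

variable {E F : Type*} [NormedAddCommGroup E] [NormedSpace ℝ E] [FiniteDimensional ℝ E]
  [MeasurableSpace E] [BorelSpace E]

theorem ae_eq_zero_of_integral_contDiff_smul_eq_of_mutuallySingular [NormedAddCommGroup F]
    [NormedSpace ℝ F] [CompleteSpace F] {μ ν : Measure E} (hμν : μ ⟂ₘ ν) {h : E → F}
    (hh : LocallyIntegrable h (μ + ν))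
    (heq : ∀ g : E → ℝ, ContDiff ℝ ∞ g → HasCompactSupport g →
      ∫ x, g x • h x ∂μ = ∫ x, g x • h x ∂ν) :
    ∀ᵐ x ∂(μ + ν), h x = 0 := by
  classical
  -- Since `u` is `h` for `μ` and `-h` for `ν`, integrating `g • u` against `μ + ν` yields the
  -- difference of the two integrals in `heq`.
  let u : E → F := hμν.nullSet.piecewise (-h) h
  have hu : LocallyIntegrable u (μ + ν) := by
    have hS := hμν.measurableSet_nullSet
    rw [show u = hμν.nullSet.indicator (-h) + hμν.nullSetᶜ.indicator h from
      (Set.indicator_add_compl_eq_piecewise ..).symm]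
    exact (hh.neg.indicator hS).add (hh.indicator hS.compl)
  have huμ : u =ᵐ[μ] h := by
    filter_upwards [measure_eq_zero_iff_ae_notMem.1 hμν.measure_nullSet] with x hx
    exact Set.piecewise_eq_of_notMem _ _ _ hx
  have huν : u =ᵐ[ν] -h := by
    filter_upwards [mem_ae_iff.2 hμν.measure_compl_nullSet] with x hx
    exact Set.piecewise_eq_of_mem _ _ _ hx
  have hu0 : ∀ᵐ x ∂(μ + ν), u x = 0 := by
    refine ae_eq_zero_of_integral_contDiff_smul_eq_zero hu fun g hg hgc => ?_
    have hgu := hu.integrable_smul_left_of_hasCompactSupport hg.continuous hgc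
    calc ∫ x, g x • u x ∂(μ + ν)
        = ∫ x, g x • u x ∂μ + ∫ x, g x • u x ∂ν :=
          integral_add_measure hgu.left_of_add_measure hgu.right_of_add_measure
      _ = ∫ x, g x • h x ∂μ + ∫ x, -(g x • h x) ∂ν := by
          congr 1
          · exact integral_congr_ae (huμ.mono fun _ hx => by simp only [hx])
          · exact integral_congr_ae (huν.mono fun _ hx => by simp only [hx, Pi.neg_apply, smul_neg])
      _ = 0 := by rw [integral_neg, heq g hg hgc, add_neg_cancel]
  filter_upwards [hu0] with x hx
  by_cases hxS : x ∈ hμν.nullSet <;> simpa [u, hxS] using hx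

theorem boundary_measure_unique_general {n : ℕ∞} (hn : n ≠ 0) {V : E → ℝ} (hV : ContDiff ℝ n V)
    {γ : E → E} {ρ : SignedMeasure E} (hγ : LocallyIntegrable γ ρ.totalVariation)
    (hV0 : ∀ᵐ x ∂ρ.totalVariation, V x = 0)
    (hγV : ∀ᵐ x ∂ρ.totalVariation, fderiv ℝ V x (γ x) ≠ 0)
    (hconstraint : ∀ f : E → ℝ, ContDiff ℝ n f → HasCompactSupport f →
      (∫ x, fderiv ℝ f x (γ x) ∂ρ.toJordanDecomposition.posPart)
        - (∫ x, fderiv ℝ f x (γ x) ∂ρ.toJordanDecomposition.negPart) = 0) :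
    ρ = 0 := by
  have hn' : (n : WithTop ℕ∞) ≠ 0 := by exact_mod_cast hn
  have hfderiv (g : E → ℝ) (hg : ContDiff ℝ n g) : ∀ᵐ x ∂ρ.totalVariation,
      fderiv ℝ (g • V) x (γ x) = g x • fderiv ℝ V x (γ x) := by
    filter_upwards [hV0] with x hx
    rw [fderiv_smul_eq_of_eq_zero (hg.differentiable hn' x) (hV.differentiable hn' x) hx,
      _root_.smul_apply]
  have hzero : ∀ᵐ x ∂ρ.totalVariation, fderiv ℝ V x (γ x) = 0 := by
    refine ae_eq_zero_of_integral_contDiff_smul_eq_of_mutuallySingular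
      ρ.toJordanDecomposition.mutuallySingular
      (locallyIntegrable_clm_apply_of_continuous (hV.continuous_fderiv hn') hγ)
      fun g hg hgc => ?_
    have hgn : ContDiff ℝ n g := hg.of_le (by exact_mod_cast le_top)
    obtain ⟨hpos, hneg⟩ := ae_add_measure_iff.1 (hfderiv g hgn)
    rw [← integral_congr_ae hpos, ← integral_congr_ae hneg, ← sub_eq_zero]
    exact hconstraint (g • V) (hgn.smul hV) hgc.smul_right
  have hfalse : ∀ᵐ _ ∂ρ.totalVariation, False := by
    filter_upwards [hγV, hzero] with x hne h0 using hne h0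
  rw [← VectorMeasure.variation_eq_zero, ← SignedMeasure.totalVariation_eq_variation]
  simpa [ae_iff] using hfalse

end FiniteDimensional

/-- **Uniqueness of the boundary measure for oblique reflection.**
Let `G ⊆ ℝ^d` be bounded open, `V ∈ C²` vanish on `∂G`, and `γ` be continuous on `∂G`
with `γ(x)·∇V(x) < 0` there. Then any finite signed measure `ρ` supported on `∂G`
with `∫_{∂G} γ(x)·∇f(x) ρ(dx) = 0` for all `f ∈ C²_c(ℝ^d)` is the zero measure. -/
theorem boundary_measure_unique {d : ℕ}
    (G : Set (Fin d → ℝ)) (hGopen : IsOpen G) (hGbdd : Bornology.IsBounded G)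
    (V : (Fin d → ℝ) → ℝ) (hV : ContDiff ℝ 2 V)
    (hV0 : ∀ x ∈ frontier G, V x = 0)
    (γ : (Fin d → ℝ) → (Fin d → ℝ)) (hγ : ContinuousOn γ (frontier G))
    (hγV : ∀ x ∈ frontier G, fderiv ℝ V x (γ x) < 0)
    (ρ : SignedMeasure (Fin d → ℝ))
    (hsupp : ρ.totalVariation (frontier G)ᶜ = 0)
    (hconstraint : ∀ f : (Fin d → ℝ) → ℝ, ContDiff ℝ 2 f → HasCompactSupport f →
      (∫ x, fderiv ℝ f x (γ x) ∂ρ.toJordanDecomposition.posPart)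
        - (∫ x, fderiv ℝ f x (γ x) ∂ρ.toJordanDecomposition.negPart) = 0) :
    ρ = 0 := by
  have hK : IsCompact (frontier G) := hGbdd.isCompact_closure.of_isClosed_subset isClosed_frontier
    frontier_subset_closure
  have hρ : ∀ᵐ x ∂ρ.totalVariation, x ∈ frontier G := hsupp
  exact boundary_measure_unique_general two_ne_zero hV
    (integrable_of_continuousOn_isCompact_of_ae_mem hγ hK hρ).locallyIntegrable
    (hρ.mono hV0) (hρ.mono fun _ hx => (hγV _ hx).ne) hconstraint
end
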